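/- arXiv:2312.11951 — 4 statements merged into one kernel-verified Lean document; each statement's English description precedes it below -/
import Mathlib

section
/- If T ∈ A_{2p} is a CNAT of size 2p all of whose leaves are short, then every internal dot of T has either two internal dots as children or two leaves as children; consequently T has exactly p internal dots whose two children are both leaves. -/
/-!
Formalization of complete non-ambiguous trees (CNATs).

A CNAT of size `n` is modelled as a Boolean filling `D : Fin n → Fin n → Bool`
of the `n × n` grid (`D i j = true` meaning that cell in row `i`, column `j`
is dotted; rows are numbered from the top, columns from the left, `0`-based),
satisfying the root, non-ambiguity, minimality and completeness conditions.
-/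

namespace CNATf

/-- A filling of the `n × n` grid. -/
abbrev Grid (n : ℕ) := Fin n → Fin n → Bool

/-- Cell `(i, j)` is dotted. -/
def Dotted {n : ℕ} (D : Grid n) (i j : Fin n) : Prop := D i j = true

/-- There is a dotted cell above `(i, j)` in the same column. -/
def HasDotAbove {n : ℕ} (D : Grid n) (i j : Fin n) : Prop :=
  ∃ i' : Fin n, i' < i ∧ Dotted D i' j

/-- There is a dotted cell to the left of `(i, j)` in the same row. -/
def HasDotLeft {n : ℕ} (D : Grid n) (i j : Fin n) : Prop :=
  ∃ j' : Fin n, j' < j ∧ Dotted D i j'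

/-- There is a dotted cell below `(i, j)` in the same column. -/
def HasDotBelow {n : ℕ} (D : Grid n) (i j : Fin n) : Prop :=
  ∃ i' : Fin n, i < i' ∧ Dotted D i' j

/-- There is a dotted cell to the right of `(i, j)` in the same row. -/
def HasDotRight {n : ℕ} (D : Grid n) (i j : Fin n) : Prop :=
  ∃ j' : Fin n, j < j' ∧ Dotted D i j'

/-- `D` is a complete non-ambiguous tree (CNAT) on the `n × n` grid:
root, non-ambiguity, minimality (rows and columns), completeness. -/
def IsCNAT {n : ℕ} (D : Grid n) : Prop :=
  (∀ i j : Fin n, (i : ℕ) = 0 → (j : ℕ) = 0 → Dotted D i j) ∧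
  (∀ i j : Fin n, Dotted D i j → ¬((i : ℕ) = 0 ∧ (j : ℕ) = 0) →
      Xor' (HasDotAbove D i j) (HasDotLeft D i j)) ∧
  (∀ i : Fin n, ∃ j : Fin n, Dotted D i j) ∧
  (∀ j : Fin n, ∃ i : Fin n, Dotted D i j) ∧
  (∀ i j : Fin n, Dotted D i j →
      (HasDotBelow D i j ∧ HasDotRight D i j) ∨ (¬HasDotBelow D i j ∧ ¬HasDotRight D i j))

/-- A leaf: a dotted cell with no dot below it in its column and no dot
to its right in its row. -/
def IsLeaf {n : ℕ} (D : Grid n) (i j : Fin n) : Prop :=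
  Dotted D i j ∧ ¬HasDotBelow D i j ∧ ¬HasDotRight D i j

/-- An internal dot: a dotted cell with both a dot below it in its column and
a dot to its right in its row. -/
def IsInternal {n : ℕ} (D : Grid n) (i j : Fin n) : Prop :=
  Dotted D i j ∧ HasDotBelow D i j ∧ HasDotRight D i j

/-- `p` is the nearest dotted cell above `l` in the column of `l`. -/
def ParentAbove {n : ℕ} (D : Grid n) (p l : Fin n × Fin n) : Prop :=
  p.2 = l.2 ∧ p.1 < l.1 ∧ Dotted D p.1 p.2 ∧
    ∀ k : Fin n, p.1 < k → k < l.1 → ¬Dotted D k l.2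

/-- `p` is the nearest dotted cell to the left of `l` in the row of `l`,
and there is no dotted cell above `l` in its column. -/
def ParentLeft {n : ℕ} (D : Grid n) (p l : Fin n × Fin n) : Prop :=
  p.1 = l.1 ∧ p.2 < l.2 ∧ Dotted D p.1 p.2 ∧
    (∀ k : Fin n, p.2 < k → k < l.2 → ¬Dotted D l.1 k) ∧
    ¬HasDotAbove D l.1 l.2

/-- `p` is the parent of the dot `l`: the nearest dotted cell above `l` in its
column if such a cell exists, otherwise the nearest dotted cell to its left. -/
def IsParent {n : ℕ} (D : Grid n) (p l : Fin n × Fin n) : Prop :=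
  ParentAbove D p l ∨ ParentLeft D p l

/-- `c` is the left child of the internal dot `p`: the nearest dot below `p`
in the column of `p`. -/
def IsLeftChild {n : ℕ} (D : Grid n) (p c : Fin n × Fin n) : Prop :=
  c.2 = p.2 ∧ p.1 < c.1 ∧ Dotted D c.1 c.2 ∧
    ∀ k : Fin n, p.1 < k → k < c.1 → ¬Dotted D k p.2

/-- `c` is the right child of the internal dot `p`: the nearest dot to the
right of `p` in the row of `p`. -/
def IsRightChild {n : ℕ} (D : Grid n) (p c : Fin n × Fin n) : Prop :=
  c.1 = p.1 ∧ p.2 < c.2 ∧ Dotted D c.1 c.2 ∧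
    ∀ k : Fin n, p.2 < k → k < c.2 → ¬Dotted D p.1 k

/-- A left leaf: a leaf whose parent is above it in its column. -/
def IsLeftLeaf {n : ℕ} (D : Grid n) (l : Fin n × Fin n) : Prop :=
  IsLeaf D l.1 l.2 ∧ ∃ p : Fin n × Fin n, ParentAbove D p l

/-- A right leaf: a leaf whose parent is to its left in its row. -/
def IsRightLeaf {n : ℕ} (D : Grid n) (l : Fin n × Fin n) : Prop :=
  IsLeaf D l.1 l.2 ∧ ∃ p : Fin n × Fin n, ParentLeft D p l

/-- A short leaf: a leaf whose parent lies in a cell adjacent to it. -/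
def IsShortLeaf {n : ℕ} (D : Grid n) (l : Fin n × Fin n) : Prop :=
  IsLeaf D l.1 l.2 ∧ ∃ p : Fin n × Fin n, IsParent D p l ∧
    (((p.1 : ℕ) + 1 = (l.1 : ℕ) ∧ p.2 = l.2) ∨ ((p.2 : ℕ) + 1 = (l.2 : ℕ) ∧ p.1 = l.1))

/-- A long leaf: a leaf which is not short. -/
def IsLongLeaf {n : ℕ} (D : Grid n) (l : Fin n × Fin n) : Prop :=
  IsLeaf D l.1 l.2 ∧ ¬IsShortLeaf D l

/-- All leaves of `D` are short (i.e. `D ∈ 𝒜ₙ`). -/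
def AllLeavesShort {n : ℕ} (D : Grid n) : Prop :=
  ∀ l : Fin n × Fin n, IsLeaf D l.1 l.2 → IsShortLeaf D l

/-- `π` is the permutation associated with the CNAT `D`: for every row `i`,
the leaf of row `i` lies in column `π i`. -/
def IsAssocPerm {n : ℕ} (D : Grid n) (π : Equiv.Perm (Fin n)) : Prop :=
  ∀ i : Fin n, IsLeaf D i (π i)

/-- Two left leaves `l₁`, `l₂` (with respective parents `p₁`, `p₂`) are
interacting if `r(p₁) < r(l₂) < r(l₁)` or `r(p₂) < r(l₁) < r(l₂)`. -/
def InteractingLeft {n : ℕ} (D : Grid n) (l₁ l₂ : Fin n × Fin n) : Prop :=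
  IsLeftLeaf D l₁ ∧ IsLeftLeaf D l₂ ∧
    ∃ p₁ p₂ : Fin n × Fin n, ParentAbove D p₁ l₁ ∧ ParentAbove D p₂ l₂ ∧
      ((p₁.1 < l₂.1 ∧ l₂.1 < l₁.1) ∨ (p₂.1 < l₁.1 ∧ l₁.1 < l₂.1))

/-- Two right leaves `l₁`, `l₂` (with respective parents `p₁`, `p₂`) are
interacting if `c(p₁) < c(l₂) < c(l₁)` or `c(p₂) < c(l₁) < c(l₂)`. -/
def InteractingRight {n : ℕ} (D : Grid n) (l₁ l₂ : Fin n × Fin n) : Prop :=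
  IsRightLeaf D l₁ ∧ IsRightLeaf D l₂ ∧
    ∃ p₁ p₂ : Fin n × Fin n, ParentLeft D p₁ l₁ ∧ ParentLeft D p₂ l₂ ∧
      ((p₁.2 < l₂.2 ∧ l₂.2 < l₁.2) ∨ (p₂.2 < l₁.2 ∧ l₁.2 < l₂.2))

/-- Two leaves are interacting (as left leaves or as right leaves). -/
def Interacting {n : ℕ} (D : Grid n) (l₁ l₂ : Fin n × Fin n) : Prop :=
  InteractingLeft D l₁ l₂ ∨ InteractingRight D l₁ l₂

/-- The switch `S(T, l₁, l₂)` of two interacting leaves: `l₁` and `l₂` are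
erased and replaced by dots at `(r(l₂), c(l₁))` and `(r(l₁), c(l₂))`
(for left leaves this exchanges their row labels, for right leaves this
exchanges their column labels; both descriptions yield the same filling). -/
def switchLeaves {n : ℕ} (D : Grid n) (l₁ l₂ : Fin n × Fin n) : Grid n := fun i j =>
  if (i = l₂.1 ∧ j = l₁.2) ∨ (i = l₁.1 ∧ j = l₂.2) then true
  else if (i = l₁.1 ∧ j = l₁.2) ∨ (i = l₂.1 ∧ j = l₂.2) then false
  else D i j


/-!
Adjacency of a leaf to its parent is the covering relation `⋖` of the product order on cells. The
crux is that a dot covered by a leaf on one side is covered by a leaf on the other side. Say that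
`(i, j)` is covered by a leaf below, and let `(i, j₀)` be the dot preceding the leaf `(i, k)` of
row `i`. If `j < j₀`, let `(i₀, j₀)` be the dot preceding the leaf of column `j₀`. The leaf below
`(i, j)` forces `i < i₀`, and by induction `(i₀, j₀)` is covered by a leaf on its right. This leaf
lies in column `k`, below the leaf `(i, k)`, which is absurd.

So every leaf covers exactly one dot, that dot is covered by exactly two leaves, and there is one
leaf per row.
-/

variable {n : ℕ} {D : Grid n} {i i' j k : Fin n} {c c' d d' l : Fin n × Fin n}

/-- No dot has both a dot above it and a dot to its left. Unlike the non-ambiguity axiom of CNATs,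
this allows several dots with neither, that is, forests. -/
def NonAmbiguous (D : Grid n) : Prop :=
  ∀ ⦃i j⦄, Dotted D i j → HasDotAbove D i j → ¬HasDotLeft D i j

/-- The completeness axiom of CNATs. -/
def Complete (D : Grid n) : Prop :=
  ∀ ⦃i j⦄, Dotted D i j → (HasDotBelow D i j ↔ HasDotRight D i j)

/-- A complete non-ambiguous forest all of whose leaves are short. Unlike `IsShortLeaf`, the field
`exists_covBy` is visibly invariant under transposition; `⋖` is the covering relation of the product
order, so that `d ⋖ l` says that `l` is the cell just below or just to the right of `d`. -/
structure IsShortForest (D : Grid n) : Prop where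
  nonAmbiguous : NonAmbiguous D
  complete : Complete D
  exists_covBy : ∀ ⦃l : Fin n × Fin n⦄, IsLeaf D l.1 l.2 → ∃ d, d ⋖ l ∧ Dotted D d.1 d.2

/-- A cherry: an internal dot whose two children are leaves. -/
def IsCherry (D : Grid n) (d : Fin n × Fin n) : Prop :=
  IsInternal D d.1 d.2 ∧ ∃ c₁ c₂ : Fin n × Fin n, IsLeftChild D d c₁ ∧ IsRightChild D d c₂ ∧
    IsLeaf D c₁.1 c₁.2 ∧ IsLeaf D c₂.1 c₂.2

theorem IsCNAT.nonAmbiguous (hD : IsCNAT D) : NonAmbiguous D := by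
  rintro i j hij habove hleft
  have not_root : ¬((i : ℕ) = 0 ∧ (j : ℕ) = 0) := by
    obtain ⟨i', hi', -⟩ := habove
    have : (i' : ℕ) < i := hi'
    omega
  rcases hD.2.1 i j hij not_root with ⟨-, h⟩ | ⟨-, h⟩
  · exact h hleft
  · exact h habove

theorem IsCNAT.complete (hD : IsCNAT D) : Complete D := by
  intro i j hij
  have := hD.2.2.2.2 i j hij
  tauto

theorem IsParent.dotted (h : IsParent D d l) : Dotted D d.1 d.2 :=
  h.elim (·.2.2.1) (·.2.2.1)

theorem IsShortLeaf.exists_covBy (h : IsShortLeaf D l) : ∃ d, d ⋖ l ∧ Dotted D d.1 d.2 := by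
  obtain ⟨-, d, hparent, hadj⟩ := h
  refine ⟨d, ?_, hparent.dotted⟩
  simp only [Prod.covBy_iff, Fin.covBy_iff, Nat.covBy_iff_add_one_eq]
  tauto

theorem IsCNAT.isShortForest (hD : IsCNAT D) (hshort : AllLeavesShort D) : IsShortForest D :=
  ⟨hD.nonAmbiguous, hD.complete, fun l hl => (hshort l hl).exists_covBy⟩

theorem dotted_flip : Dotted (flip D) j i ↔ Dotted D i j :=
  Iff.rfl

theorem isLeaf_flip : IsLeaf (flip D) j i ↔ IsLeaf D i j :=
  and_congr_right fun _ => and_comm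

theorem isLeftChild_flip : IsLeftChild (flip D) d.swap c.swap ↔ IsRightChild D d c :=
  Iff.rfl

theorem NonAmbiguous.flip (h : NonAmbiguous D) : NonAmbiguous (flip D) :=
  fun _ _ hd habove hleft => h hd hleft habove

theorem Complete.flip (h : Complete D) : Complete (flip D) :=
  fun _ _ hd => (h hd).symm

theorem IsShortForest.flip (h : IsShortForest D) : IsShortForest (flip D) where
  nonAmbiguous := h.nonAmbiguous.flip
  complete := h.complete.flip
  exists_covBy l hl := by
    obtain ⟨d, hdl, hd⟩ := h.exists_covBy (l := l.swap) (isLeaf_flip.1 hl)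
    exact ⟨d.swap, Prod.swap_covBy_swap.1 hdl, hd⟩

theorem IsLeaf.eq_of_same_row (hj : IsLeaf D i j) (hk : IsLeaf D i k) : j = k :=
  le_antisymm (not_lt.1 fun hlt => hk.2.2 ⟨j, hlt, hj.1⟩)
    (not_lt.1 fun hlt => hj.2.2 ⟨k, hlt, hk.1⟩)

theorem Complete.exists_isLeaf_in_row (h : Complete D) (hij : Dotted D i j) :
    ∃ k, j ≤ k ∧ IsLeaf D i k := by
  obtain ⟨k, hjk, hk⟩ := (Set.toFinite {k | Dotted D i k}).exists_le_maximal hij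
  have not_right : ¬HasDotRight D i k := fun ⟨_, hlt, hdot⟩ => hk.not_gt hdot hlt
  exact ⟨k, hjk, hk.prop, mt (h hk.prop).1 not_right, not_right⟩

theorem Complete.card_isLeaf (h : Complete D) (hrow : ∀ i, ∃ j, Dotted D i j) :
    Nat.card {l : Fin n × Fin n // IsLeaf D l.1 l.2} = n := by
  let row (l : {l : Fin n × Fin n // IsLeaf D l.1 l.2}) : Fin n := l.1.1
  have row_bijective : row.Bijective := by
    constructor
    · rintro ⟨⟨i, j⟩, hj⟩ ⟨⟨_, k⟩, hk⟩ rfl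
      cases hj.eq_of_same_row hk
      rfl
    · intro i
      obtain ⟨j, hij⟩ := hrow i
      obtain ⟨k, -, hk⟩ := h.exists_isLeaf_in_row hij
      exact ⟨⟨(i, k), hk⟩, rfl⟩
  rw [Nat.card_eq_of_bijective row row_bijective, Nat.card_fin]

theorem NonAmbiguous.eq_of_covBy (h : NonAmbiguous D) (hl : Dotted D l.1 l.2)
    (hd : Dotted D d.1 d.2) (hd' : Dotted D d'.1 d'.2) (hdl : d ⋖ l) (hdl' : d' ⋖ l) : d = d' := by
  obtain ⟨i, j⟩ := l
  obtain ⟨a, b⟩ := d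
  obtain ⟨a', b'⟩ := d'
  rw [Prod.mk_covBy_mk_iff] at hdl hdl'
  obtain ⟨ha, rfl⟩ | ⟨hb, rfl⟩ := hdl <;> obtain ⟨ha', rfl⟩ | ⟨hb', rfl⟩ := hdl'
  · rw [ha.unique_left ha']
  · exact (h hl ⟨a, ha.lt, hd⟩ ⟨b', hb'.lt, hd'⟩).elim
  · exact (h hl ⟨a', ha'.lt, hd'⟩ ⟨b, hb.lt, hd⟩).elim
  · rw [hb.unique_left hb']

theorem IsLeftChild.unique (hc : IsLeftChild D d c) (hc' : IsLeftChild D d c') : c = c' := by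
  obtain ⟨hcol, hlt, hdot, hnearest⟩ := hc
  obtain ⟨hcol', hlt', hdot', hnearest'⟩ := hc'
  rw [hcol] at hdot
  rw [hcol'] at hdot'
  refine Prod.ext (le_antisymm ?_ ?_) (hcol.trans hcol'.symm)
  · exact not_lt.1 fun h => hnearest c'.1 hlt' h hdot'
  · exact not_lt.1 fun h => hnearest' c.1 hlt h hdot

theorem IsRightChild.unique (hc : IsRightChild D d c) (hc' : IsRightChild D d c') : c = c' :=
  Prod.swap_injective ((isLeftChild_flip.2 hc).unique (isLeftChild_flip.2 hc'))

theorem isLeftChild_of_covBy (hi : i ⋖ i') (hdot : Dotted D i' j) :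
    IsLeftChild D (i, j) (i', j) :=
  ⟨rfl, hi.lt, hdot, fun _ hlt hgt => (hi.2 hlt hgt).elim⟩

theorem isRightChild_of_covBy (hj : j ⋖ k) (hdot : Dotted D i k) :
    IsRightChild D (i, j) (i, k) :=
  ⟨rfl, hj.lt, hdot, fun _ hlt hgt => (hj.2 hlt hgt).elim⟩

namespace IsShortForest

theorem exists_covBy_above (h : IsShortForest D) (hl : IsLeaf D i j) (habove : HasDotAbove D i j) :
    ∃ i', i' ⋖ i ∧ Dotted D i' j := by
  obtain ⟨⟨i', j'⟩, hcov, hdot⟩ := h.exists_covBy (l := (i, j)) hl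
  obtain ⟨hi, rfl⟩ | ⟨hj, rfl⟩ := Prod.mk_covBy_mk_iff.1 hcov
  · exact ⟨i', hi, hdot⟩
  · exact (h.nonAmbiguous hl.1 habove ⟨j', hj.lt, hdot⟩).elim

theorem exists_covBy_isLeaf_in_column (h : IsShortForest D) (hij : Dotted D i j)
    (hbelow : HasDotBelow D i j) :
    ∃ i₀ m, i ≤ i₀ ∧ i₀ ⋖ m ∧ Dotted D i₀ j ∧ IsLeaf D m j := by
  obtain ⟨m, him, hm⟩ := h.complete.flip.exists_isLeaf_in_row hij
  rw [isLeaf_flip] at hm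
  have him : i < m := him.lt_of_ne (by rintro rfl; exact hm.2.1 hbelow)
  obtain ⟨i₀, hi₀, hdot⟩ := h.exists_covBy_above hm ⟨i, him, hij⟩
  exact ⟨i₀, m, hi₀.le_of_lt him, hi₀, hdot, hm⟩

theorem exists_covBy_isLeaf_in_row (h : IsShortForest D) (hij : Dotted D i j)
    (hright : HasDotRight D i j) :
    ∃ j₀ k, j ≤ j₀ ∧ j₀ ⋖ k ∧ Dotted D i j₀ ∧ IsLeaf D i k := by
  simpa only [isLeaf_flip, dotted_flip] using h.flip.exists_covBy_isLeaf_in_column hij hright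

theorem exists_right_leaf_of_left_leaf (h : IsShortForest D) (hij : Dotted D i j) (hi : i ⋖ i')
    (hl : IsLeaf D i' j) : ∃ k, j ⋖ k ∧ IsLeaf D i k := by
  induction j using WellFoundedGT.induction generalizing i i' with
  | ind j ih =>
    obtain ⟨j₀, k, hj, hj₀k, hij₀, hk⟩ :=
      h.exists_covBy_isLeaf_in_row hij ((h.complete hij).1 ⟨i', hi.lt, hl.1⟩)
    obtain rfl | hj := hj.eq_or_lt
    · exact ⟨k, hj₀k, hk⟩
    obtain ⟨i₀, m, hi₀, hi₀m, hi₀j₀, hm⟩ :=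
      h.exists_covBy_isLeaf_in_column hij₀ ((h.complete hij₀).2 ⟨k, hj₀k.lt, hk.1⟩)
    obtain rfl | hi₀ := hi₀.eq_or_lt
    · obtain rfl := hi.unique_right hi₀m
      exact (hl.2.2 ⟨j₀, hj, hm.1⟩).elim
    · obtain ⟨k', hj₀k', hk'⟩ := ih j₀ hj hi₀j₀ hi₀m hm
      obtain rfl := hj₀k.unique_right hj₀k'
      exact (hk.2.1 ⟨i₀, hi₀, hk'.1⟩).elim

theorem exists_left_leaf_of_right_leaf (h : IsShortForest D) (hij : Dotted D i j) (hj : j ⋖ k)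
    (hl : IsLeaf D i k) : ∃ i', i ⋖ i' ∧ IsLeaf D i' j := by
  simpa only [isLeaf_flip] using h.flip.exists_right_leaf_of_left_leaf hij hj (isLeaf_flip.2 hl)

theorem covBy_of_isLeftChild (h : IsShortForest D) (hd : Dotted D d.1 d.2)
    (hc : IsLeftChild D d c) (hl : IsLeaf D c.1 c.2) : d.1 ⋖ c.1 := by
  obtain ⟨hcol, hlt, -, hnearest⟩ := hc
  rw [hcol] at hl
  obtain ⟨k, hkc, hk⟩ := h.exists_covBy_above hl ⟨d.1, hlt, hd⟩
  have hdk : ¬d.1 < k := fun hdk => hnearest k hdk hkc.lt hk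
  rwa [(hkc.le_of_lt hlt).eq_of_not_lt hdk]

theorem covBy_of_isRightChild (h : IsShortForest D) (hd : Dotted D d.1 d.2)
    (hc : IsRightChild D d c) (hl : IsLeaf D c.1 c.2) : d.2 ⋖ c.2 :=
  h.flip.covBy_of_isLeftChild (d := d.swap) hd (isLeftChild_flip.2 hc) (isLeaf_flip.2 hl)

theorem isLeaf_rightChild_of_isLeaf_leftChild (h : IsShortForest D) (hd : Dotted D d.1 d.2)
    (hc : IsLeftChild D d c) (hc' : IsRightChild D d c') (hl : IsLeaf D c.1 c.2) :
    IsLeaf D c'.1 c'.2 := by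
  have hcov : d.1 ⋖ c.1 := h.covBy_of_isLeftChild hd hc hl
  rw [hc.1] at hl
  obtain ⟨k, hk, hleaf⟩ := h.exists_right_leaf_of_left_leaf hd hcov hl
  rwa [hc'.unique (isRightChild_of_covBy hk hleaf.1)]

theorem isLeaf_leftChild_iff_isLeaf_rightChild (h : IsShortForest D) (hd : Dotted D d.1 d.2)
    (hc : IsLeftChild D d c) (hc' : IsRightChild D d c') :
    IsLeaf D c.1 c.2 ↔ IsLeaf D c'.1 c'.2 := by
  refine ⟨h.isLeaf_rightChild_of_isLeaf_leftChild hd hc hc', fun hl => ?_⟩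
  exact isLeaf_flip.1 <| h.flip.isLeaf_rightChild_of_isLeaf_leftChild (d := d.swap) hd
    (isLeftChild_flip.2 hc') (c' := c.swap) hc (isLeaf_flip.2 hl)

theorem isCherry_iff (h : IsShortForest D) :
    IsCherry D (i, j) ↔
      Dotted D i j ∧ (∃ i', i ⋖ i' ∧ IsLeaf D i' j) ∧ ∃ k, j ⋖ k ∧ IsLeaf D i k := by
  constructor
  · rintro ⟨⟨hij, -, -⟩, c, c', hc, hc', hl, hl'⟩
    have hi := h.covBy_of_isLeftChild hij hc hl
    have hj := h.covBy_of_isRightChild hij hc' hl'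
    rw [hc.1] at hl
    rw [hc'.1] at hl'
    exact ⟨hij, ⟨c.1, hi, hl⟩, c'.2, hj, hl'⟩
  · rintro ⟨hij, ⟨i', hi, hl⟩, k, hj, hl'⟩
    exact ⟨⟨hij, ⟨i', hi.lt, hl.1⟩, k, hj.lt, hl'.1⟩, (i', j), (i, k),
      isLeftChild_of_covBy hi hl.1, isRightChild_of_covBy hj hl'.1, hl, hl'⟩

theorem isCherry_of_covBy (h : IsShortForest D) (hd : Dotted D d.1 d.2) (hdl : d ⋖ l)
    (hl : IsLeaf D l.1 l.2) : IsCherry D d := by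
  obtain ⟨i, j⟩ := d
  obtain ⟨a, b⟩ := l
  obtain ⟨hi, rfl⟩ | ⟨hj, rfl⟩ := Prod.mk_covBy_mk_iff.1 hdl
  · exact h.isCherry_iff.2 ⟨hd, ⟨a, hi, hl⟩, h.exists_right_leaf_of_left_leaf hd hi hl⟩
  · exact h.isCherry_iff.2 ⟨hd, h.exists_left_leaf_of_right_leaf hd hj hl, b, hj, hl⟩

theorem existsUnique_isCherry_covBy (h : IsShortForest D) (hl : IsLeaf D l.1 l.2) :
    ∃! d, IsCherry D d ∧ d ⋖ l := by
  obtain ⟨d, hdl, hd⟩ := h.exists_covBy hl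
  refine ⟨d, ⟨h.isCherry_of_covBy hd hdl hl, hdl⟩, ?_⟩
  rintro d' ⟨hd', hdl'⟩
  exact h.nonAmbiguous.eq_of_covBy hl.1 hd'.1.1 hd hdl' hdl

theorem ncard_isLeaf_covBy (h : IsShortForest D) (hd : IsCherry D d) :
    {l : Fin n × Fin n | IsLeaf D l.1 l.2 ∧ d ⋖ l}.ncard = 2 := by
  obtain ⟨i, j⟩ := d
  obtain ⟨-, ⟨i', hi, hl⟩, k, hj, hl'⟩ := h.isCherry_iff.1 hd
  refine Set.ncard_eq_two.2 ⟨(i', j), (i, k), fun heq => hi.ne' (congrArg Prod.fst heq), ?_⟩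
  ext ⟨a, b⟩
  simp only [Set.mem_ofPred_eq, Prod.mk_covBy_mk_iff, Set.mem_insert_iff, Set.mem_singleton_iff,
    Prod.mk.injEq]
  constructor
  · rintro ⟨-, ⟨ha, rfl⟩ | ⟨hb, rfl⟩⟩
    · exact Or.inl ⟨ha.unique_right hi, rfl⟩
    · exact Or.inr ⟨rfl, hb.unique_right hj⟩
  · rintro (⟨rfl, rfl⟩ | ⟨rfl, rfl⟩)
    · exact ⟨hl, Or.inl ⟨hi, rfl⟩⟩
    · exact ⟨hl', Or.inr ⟨hj, rfl⟩⟩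

theorem card_isCherry_mul_two (h : IsShortForest D) :
    Nat.card {d // IsCherry D d} * 2 = Nat.card {l : Fin n × Fin n // IsLeaf D l.1 l.2} := by
  classical
  rw [Nat.card_eq_fintype_card, Nat.card_eq_fintype_card, Fintype.card_subtype,
    Fintype.card_subtype, ← mul_one (Finset.card {l : Fin n × Fin n | IsLeaf D l.1 l.2})]
  refine Finset.card_mul_eq_card_mul (· ⋖ ·) (fun d hd => ?_) (fun l hl => ?_)
  · rw [← h.ncard_isLeaf_covBy (Finset.mem_filter_univ d |>.1 hd), ← Set.ncard_coe_finset]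
    simp [Finset.bipartiteAbove]
  · obtain ⟨d, hd, hunique⟩ := h.existsUnique_isCherry_covBy (Finset.mem_filter_univ l |>.1 hl)
    refine Finset.card_eq_one.2 ⟨d, Finset.eq_singleton_iff_unique_mem.2 ?_⟩
    simpa [Finset.bipartiteBelow, -Prod.forall] using ⟨hd, fun d' h₁ h₂ => hunique d' ⟨h₁, h₂⟩⟩

end IsShortForest

theorem Complete.isInternal_of_not_isLeaf (h : Complete D) (hij : Dotted D i j)
    (hl : ¬IsLeaf D i j) : IsInternal D i j := by
  have := h hij
  unfold IsLeaf at hl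
  unfold IsInternal
  tauto

theorem cnat_all_short_children_general {n : ℕ} {D : Grid n} (h : IsShortForest D)
    (hrow : ∀ i, ∃ j, Dotted D i j) :
    (∀ d c₁ c₂ : Fin n × Fin n, IsInternal D d.1 d.2 →
        IsLeftChild D d c₁ → IsRightChild D d c₂ →
        (IsInternal D c₁.1 c₁.2 ∧ IsInternal D c₂.1 c₂.2) ∨
        (IsLeaf D c₁.1 c₁.2 ∧ IsLeaf D c₂.1 c₂.2)) ∧
    Nat.card {d // IsCherry D d} * 2 = n := by
  refine ⟨fun d c₁ c₂ hd h₁ h₂ => ?_, h.card_isCherry_mul_two.trans (h.complete.card_isLeaf hrow)⟩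
  have leaf_iff := h.isLeaf_leftChild_iff_isLeaf_rightChild hd.1 h₁ h₂
  by_cases hl : IsLeaf D c₁.1 c₁.2
  · exact Or.inr ⟨hl, leaf_iff.1 hl⟩
  · exact Or.inl ⟨h.complete.isInternal_of_not_isLeaf h₁.2.2.1 hl,
      h.complete.isInternal_of_not_isLeaf h₂.2.2.1 (mt leaf_iff.2 hl)⟩

/-- If `T ∈ 𝒜₂ₚ` is a CNAT of size `2p` all of whose leaves
are short, then every internal dot of `T` has either two internal dots as
children or two leaves as children; consequently `T` has exactly `p` internal
dots whose two children are both leaves. -/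
theorem cnat_all_short_children (p : ℕ) (hp : 1 ≤ p) (D : Grid (2 * p))
    (hD : IsCNAT D) (hshort : AllLeavesShort D) :
    (∀ d c₁ c₂ : Fin (2 * p) × Fin (2 * p), IsInternal D d.1 d.2 →
        IsLeftChild D d c₁ → IsRightChild D d c₂ →
        (IsInternal D c₁.1 c₁.2 ∧ IsInternal D c₂.1 c₂.2) ∨
        (IsLeaf D c₁.1 c₁.2 ∧ IsLeaf D c₂.1 c₂.2)) ∧
    Nat.card {d : Fin (2 * p) × Fin (2 * p) // IsInternal D d.1 d.2 ∧
        ∃ c₁ c₂ : Fin (2 * p) × Fin (2 * p), IsLeftChild D d c₁ ∧ IsRightChild D d c₂ ∧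
          IsLeaf D c₁.1 c₁.2 ∧ IsLeaf D c₂.1 c₂.2} = p := by
  obtain ⟨hchildren, hcard⟩ := cnat_all_short_children_general (hD.isShortForest hshort) hD.2.2.1
  exact ⟨hchildren, Nat.eq_of_mul_eq_mul_right two_pos (hcard.trans (mul_comm 2 p))⟩

end CNATf
end

section
/- Let T be a CNAT of size n and let l_1 and l_2 be two interacting leaves of T. Then the filling S(T,l_1,l_2) obtained by switching l_1 and l_2 (exchanging their row labels if they are left leaves, or their column labels if they are right leaves) is again a CNAT of size n. -/
/-!
Formalization of complete non-ambiguous trees (CNATs).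

A CNAT of size `n` is modelled as a Boolean filling `D : Fin n → Fin n → Bool`
of the `n × n` grid (`D i j = true` meaning that cell in row `i`, column `j`
is dotted; rows are numbered from the top, columns from the left, `0`-based),
satisfying the root, non-ambiguity, minimality and completeness conditions.
-/

namespace CNATf

/-!
The row of a left leaf contains no other dot, so switching two left leaves amounts to exchanging
two whole rows. A permutation of the rows keeps the horizontal order of the dots in every row; if it
also keeps the vertical order of the dots in every column, it preserves CNATs. Interaction ensures
that the dots above either leaf lie above the rows of both leaves, and a leaf is the lowest dot of
its column, so the exchange is such a permutation. Right leaves are left leaves of the transposed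
filling.
-/

theorem strictMonoOn_swap {α : Type*} [Preorder α] [DecidableEq α] {s : Set α} {a b : α}
    (ha : a ∈ s → ∀ i ∈ s, i ≠ a → i < a ∧ i < b)
    (hb : b ∈ s → ∀ i ∈ s, i ≠ b → i < a ∧ i < b) :
    StrictMonoOn (Equiv.swap a b) s := by
  intro i hi k hk hik
  have hia : i ≠ a := by
    rintro rfl
    exact lt_asymm hik (ha hi k hk hik.ne').1
  have hib : i ≠ b := by
    rintro rfl
    exact lt_asymm hik (hb hi k hk hik.ne').2
  rw [Equiv.swap_apply_of_ne_of_ne hia hib]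
  rcases eq_or_ne k a with rfl | hka
  · rw [Equiv.swap_apply_left]
    exact (ha hk i hi hia).2
  rcases eq_or_ne k b with rfl | hkb
  · rw [Equiv.swap_apply_right]
    exact (hb hk i hi hib).1
  rwa [Equiv.swap_apply_of_ne_of_ne hka hkb]

section RowPermutation

variable {n : ℕ} {D : Grid n} {i j : Fin n}

theorem IsCNAT.exists_dotted_hasDotAbove (hD : IsCNAT D) (hi : (i : ℕ) ≠ 0) :
    ∃ j, Dotted D i j ∧ HasDotAbove D i j := by
  obtain ⟨j, hij, hleftmost⟩ := exists_minimal_of_wellFoundedLT (Dotted D i) (hD.2.2.1 i)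
  have hleft : ¬HasDotLeft D i j := fun ⟨k, hkj, hik⟩ => hkj.not_ge (hleftmost hik hkj.le)
  rcases hD.2.1 i j hij (fun h => hi h.1) with h | h
  · exact ⟨j, hij, h.1⟩
  · exact absurd h.1 hleft

variable {σ : Equiv.Perm (Fin n)}

theorem hasDotAbove_comp_iff (hσ : StrictMonoOn σ.symm {k | Dotted D k j})
    (hij : Dotted D (σ i) j) : HasDotAbove (D ∘ σ) i j ↔ HasDotAbove D (σ i) j := by
  refine Iff.trans (exists_congr fun k => and_congr_left fun hkj => ?_)
    (σ.exists_congr_right (q := fun k => k < σ i ∧ Dotted D k j))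
  simpa only [Equiv.symm_apply_apply] using hσ.lt_iff_lt hkj hij

theorem hasDotBelow_comp_iff (hσ : StrictMonoOn σ.symm {k | Dotted D k j})
    (hij : Dotted D (σ i) j) : HasDotBelow (D ∘ σ) i j ↔ HasDotBelow D (σ i) j := by
  refine Iff.trans (exists_congr fun k => and_congr_left fun hkj => ?_)
    (σ.exists_congr_right (q := fun k => σ i < k ∧ Dotted D k j))
  simpa only [Equiv.symm_apply_apply] using hσ.lt_iff_lt hij hkj

-- Row `0` is characterised as the only row in which no dot has a dot above it.
theorem IsCNAT.val_perm_apply_eq_zero_iff (hD : IsCNAT D)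
    (hσ : ∀ j, StrictMonoOn σ.symm {k | Dotted D k j}) :
    (σ i : ℕ) = 0 ↔ (i : ℕ) = 0 := by
  have fixes_zero : ∀ z : Fin n, (z : ℕ) = 0 → (σ z : ℕ) = 0 := by
    intro z hz
    by_contra hσz
    obtain ⟨j, hzj, habove⟩ := hD.exists_dotted_hasDotAbove hσz
    obtain ⟨k, hkz, -⟩ := (hasDotAbove_comp_iff (hσ j) hzj).2 habove
    omega
  refine ⟨fun hσi => ?_, fixes_zero i⟩
  let z : Fin n := ⟨0, i.pos⟩
  have hz : σ i = σ z := Fin.ext (hσi.trans (fixes_zero z rfl).symm)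
  rw [σ.injective hz]

theorem IsCNAT.comp_perm (hD : IsCNAT D) (hσ : ∀ j, StrictMonoOn σ.symm {k | Dotted D k j}) :
    IsCNAT (D ∘ σ) := by
  have hzero (i : Fin n) := hD.val_perm_apply_eq_zero_iff (i := i) hσ
  obtain ⟨hroot, hxor, hrow, hcol, hcomplete⟩ := hD
  refine ⟨fun i j hi hj => ?_, fun i j hij hne => ?_, fun i => hrow (σ i), fun j => ?_,
    fun i j hij => ?_⟩
  · exact hroot (σ i) j ((hzero i).2 hi) hj
  · rw [hasDotAbove_comp_iff (hσ j) hij]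
    exact hxor (σ i) j hij (by rwa [hzero i])
  · exact σ.exists_congr_right.2 (hcol j)
  · rw [hasDotBelow_comp_iff (hσ j) hij]
    exact hcomplete (σ i) j hij

end RowPermutation

section LeftLeaves

variable {n : ℕ} {D : Grid n} {l₁ l₂ : Fin n × Fin n}

theorem switchLeaves_eq_comp_swap (h₁ : ∀ j, Dotted D l₁.1 j ↔ j = l₁.2)
    (h₂ : ∀ j, Dotted D l₂.1 j ↔ j = l₂.2) :
    switchLeaves D l₁ l₂ = D ∘ Equiv.swap l₁.1 l₂.1 := by
  ext i j
  have hj₁ := h₁ j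
  have hj₂ := h₂ j
  simp only [Dotted] at hj₁ hj₂
  simp only [switchLeaves, Function.comp_apply, Equiv.swap_apply_def]
  grind

theorem IsCNAT.not_hasDotLeft {i j : Fin n} (hD : IsCNAT D) (hij : Dotted D i j)
    (habove : HasDotAbove D i j) : ¬HasDotLeft D i j := by
  have hne : ¬((i : ℕ) = 0 ∧ (j : ℕ) = 0) := by
    obtain ⟨k, hki, -⟩ := habove
    omega
  rcases hD.2.1 i j hij hne with h | h
  · exact h.2
  · exact absurd habove h.2

theorem IsCNAT.dotted_row_iff_of_isLeftLeaf {l : Fin n × Fin n} (hD : IsCNAT D)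
    (hl : IsLeftLeaf D l) (j : Fin n) : Dotted D l.1 j ↔ j = l.2 := by
  obtain ⟨⟨hdot, -, hright⟩, p, hcol, hlt, hp, -⟩ := hl
  have hleft : ¬HasDotLeft D l.1 l.2 := hD.not_hasDotLeft hdot ⟨p.1, hlt, hcol ▸ hp⟩
  refine ⟨fun hj => ?_, fun hj => hj ▸ hdot⟩
  rcases lt_trichotomy j l.2 with h | h | h
  · exact absurd ⟨j, h, hj⟩ hleft
  · exact h
  · exact absurd ⟨j, h, hj⟩ hright

theorem InteractingLeft.symm (h : InteractingLeft D l₁ l₂) : InteractingLeft D l₂ l₁ := by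
  obtain ⟨hl₁, hl₂, p₁, p₂, hp₁, hp₂, hlt⟩ := h
  exact ⟨hl₂, hl₁, p₂, p₁, hp₂, hp₁, hlt.symm⟩

theorem InteractingLeft.lt_and_lt_of_dotted {i : Fin n} (h : InteractingLeft D l₁ l₂)
    (hi : Dotted D i l₁.2) (hne : i ≠ l₁.1) : i < l₁.1 ∧ i < l₂.1 := by
  obtain ⟨⟨⟨-, hbelow, -⟩, -⟩, -, p₁, p₂, ⟨-, -, -, hnearest⟩, -, hrows⟩ := h
  have hi₁ : i < l₁.1 := lt_of_le_of_ne (not_lt.1 fun hlt => hbelow ⟨i, hlt, hi⟩) hne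
  have hip₁ : i ≤ p₁.1 := not_lt.1 fun hlt => hnearest i hlt hi₁ hi
  refine ⟨hi₁, ?_⟩
  rcases hrows with ⟨hp₁, -⟩ | ⟨-, hl⟩
  · exact hip₁.trans_lt hp₁
  · exact hi₁.trans hl

theorem IsCNAT.switchLeaves_of_interactingLeft (hD : IsCNAT D) (h : InteractingLeft D l₁ l₂) :
    IsCNAT (switchLeaves D l₁ l₂) := by
  have hrow₁ := hD.dotted_row_iff_of_isLeftLeaf h.1
  have hrow₂ := hD.dotted_row_iff_of_isLeftLeaf h.2.1
  rw [switchLeaves_eq_comp_swap hrow₁ hrow₂]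
  refine hD.comp_perm fun j => ?_
  rw [Equiv.symm_swap]
  refine strictMonoOn_swap (fun hj i hi hne => ?_) (fun hj i hi hne => ?_)
  · obtain rfl := (hrow₁ j).1 hj
    exact h.lt_and_lt_of_dotted hi hne
  · obtain rfl := (hrow₂ j).1 hj
    exact (h.symm.lt_and_lt_of_dotted hi hne).symm

end LeftLeaves

section Transposition

variable {n : ℕ} {D : Grid n}

theorem IsCNAT.flip (hD : IsCNAT D) : IsCNAT (flip D) := by
  obtain ⟨hroot, hxor, hrow, hcol, hcomplete⟩ := hD
  exact ⟨fun i j hi hj => hroot j i hj hi,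
    fun i j hij hne => (hxor j i hij (mt And.symm hne)).symm, hcol, hrow,
    fun i j hij => (hcomplete j i hij).imp And.symm And.symm⟩

theorem IsLeaf.flip {i j : Fin n} (h : IsLeaf D i j) : IsLeaf (flip D) j i :=
  ⟨h.1, h.2.2, h.2.1⟩

theorem ParentLeft.flip {p l : Fin n × Fin n} (h : ParentLeft D p l) :
    ParentAbove (flip D) p.swap l.swap :=
  ⟨h.1, h.2.1, h.2.2.1, h.2.2.2.1⟩

theorem IsRightLeaf.flip {l : Fin n × Fin n} (h : IsRightLeaf D l) :
    IsLeftLeaf (flip D) l.swap :=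
  ⟨h.1.flip, h.2.imp' Prod.swap fun _ => ParentLeft.flip⟩

variable {l₁ l₂ : Fin n × Fin n}

theorem InteractingRight.flip (h : InteractingRight D l₁ l₂) :
    InteractingLeft (flip D) l₁.swap l₂.swap := by
  obtain ⟨hl₁, hl₂, p₁, p₂, hp₁, hp₂, hlt⟩ := h
  exact ⟨hl₁.flip, hl₂.flip, p₁.swap, p₂.swap, hp₁.flip, hp₂.flip, hlt⟩

theorem flip_switchLeaves (D : Grid n) (l₁ l₂ : Fin n × Fin n) :
    flip (switchLeaves D l₁ l₂) = switchLeaves (flip D) l₁.swap l₂.swap := by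
  ext i j
  simp only [flip, switchLeaves, Prod.fst_swap, Prod.snd_swap]
  grind

theorem IsCNAT.switchLeaves_of_interactingRight (hD : IsCNAT D) (h : InteractingRight D l₁ l₂) :
    IsCNAT (switchLeaves D l₁ l₂) := by
  have hflip : IsCNAT (_root_.flip (switchLeaves D l₁ l₂)) := by
    rw [flip_switchLeaves]
    exact hD.flip.switchLeaves_of_interactingLeft h.flip
  exact hflip.flip

end Transposition

/-- Let `T` be a CNAT of size `n` and let `l₁`, `l₂` be two
interacting leaves of `T`. Then the filling `S(T, l₁, l₂)` obtained by
switching `l₁` and `l₂` is again a CNAT of size `n`. -/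
theorem cnat_switch_is_cnat (n : ℕ) (D : Grid n) (hD : IsCNAT D)
    (l₁ l₂ : Fin n × Fin n) (h : Interacting D l₁ l₂) :
    IsCNAT (switchLeaves D l₁ l₂) :=
  h.elim hD.switchLeaves_of_interactingLeft hD.switchLeaves_of_interactingRight

end CNATf
end

section
/- Let T be a CNAT, let l_1 and l_2 be two interacting leaves of T, and let T' = S(T,l_1,l_2) be the CNAT obtained by switching them. Then the associated permutation π(T') differs from π(T) by composition with a transposition; in particular sgn π(T') = − sgn π(T). -/
/-!
Formalization of complete non-ambiguous trees (CNATs).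

A CNAT of size `n` is modelled as a Boolean filling `D : Fin n → Fin n → Bool`
of the `n × n` grid (`D i j = true` meaning that cell in row `i`, column `j`
is dotted; rows are numbered from the top, columns from the left, `0`-based),
satisfying the root, non-ambiguity, minimality and completeness conditions.
-/

namespace CNATf

/-! The leaf of a row is its rightmost dot, so its column depends on that row alone. The switch
alters only the rows of `l₁` and `l₂`; hence `π⁻¹ * π'` fixes every other row. It does not fix the
row of `l₁`, because the cell `l₁` is erased, so it is the transposition of the two rows. -/

theorem eq_swap_of_apply_ne_of_forall_apply_eq {α : Type*} [DecidableEq α] {σ : Equiv.Perm α}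
    {a b : α} (ha : σ a ≠ a) (h : ∀ x, x ≠ a → x ≠ b → σ x = x) : σ = Equiv.swap a b := by
  have hab : σ a = b := by
    by_contra hb
    exact ha (σ.injective (h (σ a) ha hb))
  have hb : σ b ≠ b := fun hb ↦ ha (by rw [σ.injective (hab.trans hb.symm), hb])
  have hba : σ b = a := by
    by_contra hne
    exact hb (σ.injective (h (σ b) hne hb))
  ext x
  rcases eq_or_ne x a with rfl | hxa
  · rw [hab, Equiv.swap_apply_left]
  rcases eq_or_ne x b with rfl | hxb
  · rw [hba, Equiv.swap_apply_right]
  · rw [h x hxa hxb, Equiv.swap_apply_of_ne_of_ne hxa hxb]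

section

variable {n : ℕ} {D : Grid n} {l₁ l₂ : Fin n × Fin n}

theorem IsLeaf.col_eq_of_row_eq {D' : Grid n} {i j k : Fin n} (hj : IsLeaf D i j)
    (hk : IsLeaf D' i k) (hrow : D i = D' i) : j = k := by
  rcases lt_trichotomy j k with hjk | hjk | hkj
  · exact absurd ⟨k, hjk, (congrFun hrow k).trans hk.1⟩ hj.2.2
  · exact hjk
  · exact absurd ⟨j, hkj, (congrFun hrow j).symm.trans hj.1⟩ hk.2.2

theorem IsAssocPerm.apply_eq_of_isLeaf {π : Equiv.Perm (Fin n)} (hπ : IsAssocPerm D π)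
    {i j : Fin n} (h : IsLeaf D i j) : π i = j :=
  (hπ i).col_eq_of_row_eq h rfl

theorem switchLeaves_row_of_ne {i : Fin n} (h₁ : i ≠ l₁.1) (h₂ : i ≠ l₂.1) :
    switchLeaves D l₁ l₂ i = D i := by
  funext j
  simp [switchLeaves, h₁, h₂]

theorem not_dotted_switchLeaves (hrow : l₁.1 ≠ l₂.1) (hcol : l₁.2 ≠ l₂.2) :
    ¬Dotted (switchLeaves D l₁ l₂) l₁.1 l₁.2 := by
  simp [Dotted, switchLeaves, hrow, hcol]

theorem IsAssocPerm.eq_mul_swap_of_switchLeaves {π π' : Equiv.Perm (Fin n)} {a b : Fin n}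
    (hπ : IsAssocPerm D π) (hab : a ≠ b)
    (hπ' : IsAssocPerm (switchLeaves D (a, π a) (b, π b)) π') :
    π' = π * Equiv.swap a b := by
  rw [← inv_mul_eq_iff_eq_mul]
  apply eq_swap_of_apply_ne_of_forall_apply_eq
  · rw [Equiv.Perm.mul_apply, Ne, Equiv.Perm.inv_eq_iff_eq]
    intro ha
    exact not_dotted_switchLeaves hab (π.injective.ne hab) (ha ▸ (hπ' a).1)
  · intro i hia hib
    rw [Equiv.Perm.mul_apply, Equiv.Perm.inv_eq_iff_eq]
    exact (hπ' i).col_eq_of_row_eq (hπ i) (switchLeaves_row_of_ne hia hib)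

theorem Interacting.isLeaf (h : Interacting D l₁ l₂) :
    IsLeaf D l₁.1 l₁.2 ∧ IsLeaf D l₂.1 l₂.2 := by
  rcases h with ⟨h₁, h₂, -⟩ | ⟨h₁, h₂, -⟩ <;> exact ⟨h₁.1, h₂.1⟩

theorem Interacting.ne (h : Interacting D l₁ l₂) : l₁ ≠ l₂ := by
  rintro rfl
  rcases h with ⟨-, -, _, _, -, -, h⟩ | ⟨-, -, _, _, -, -, h⟩ <;>
    exact h.elim (fun h ↦ h.2.false) (fun h ↦ h.2.false)

theorem cnat_switch_sign_general {π π' : Equiv.Perm (Fin n)} (h₁ : IsLeaf D l₁.1 l₁.2)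
    (h₂ : IsLeaf D l₂.1 l₂.2) (hne : l₁ ≠ l₂) (hπ : IsAssocPerm D π)
    (hπ' : IsAssocPerm (switchLeaves D l₁ l₂) π') :
    l₁.1 ≠ l₂.1 ∧ π' = π * Equiv.swap l₁.1 l₂.1 ∧
      Equiv.Perm.sign π' = -Equiv.Perm.sign π := by
  obtain ⟨a, j⟩ := l₁
  obtain ⟨b, k⟩ := l₂
  obtain rfl : π a = j := hπ.apply_eq_of_isLeaf h₁
  obtain rfl : π b = k := hπ.apply_eq_of_isLeaf h₂
  have hab : a ≠ b := by
    rintro rfl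
    exact hne rfl
  have hswap : π' = π * Equiv.swap a b := hπ.eq_mul_swap_of_switchLeaves hab hπ'
  refine ⟨hab, hswap, ?_⟩
  rw [hswap, Equiv.Perm.sign_mul, Equiv.Perm.sign_swap hab, mul_neg, mul_one]

end

/-- Let `T` be a CNAT, `l₁` and `l₂` two interacting leaves
of `T`, and `T' = S(T, l₁, l₂)`. Then `π(T')` differs from `π(T)` by
composition with a transposition; in particular `sgn π(T') = - sgn π(T)`. -/
theorem cnat_switch_sign (n : ℕ) (D : Grid n) (hD : IsCNAT D)
    (l₁ l₂ : Fin n × Fin n) (h : Interacting D l₁ l₂)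
    (π π' : Equiv.Perm (Fin n)) (hπ : IsAssocPerm D π)
    (hπ' : IsAssocPerm (switchLeaves D l₁ l₂) π') :
    (∃ a b : Fin n, a ≠ b ∧
        (π' = π * Equiv.swap a b ∨ π' = Equiv.swap a b * π)) ∧
    Equiv.Perm.sign π' = - Equiv.Perm.sign π := by
  obtain ⟨hrow, hswap, hsign⟩ := cnat_switch_sign_general h.isLeaf.1 h.isLeaf.2 h.ne hπ hπ'
  exact ⟨⟨l₁.1, l₂.1, hrow, .inl hswap⟩, hsign⟩

end CNATf
end

section
/- Let p ≥ 1 and let σ' be a permutation of {1,…,p}. Define σ : {1,…,2p} → {1,…,2p} by σ(2i−1) = 2σ'(i) and σ(2i) = 2σ'(i) − 1 for 1 ≤ i ≤ p. Then σ is a permutation of {1,…,2p}, its number of inversions satisfies inv(σ) = 4·inv(σ') + p, and consequently sgn(σ) = (−1)^p. -/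
/-!
Formalization of complete non-ambiguous trees (CNATs).

A CNAT of size `n` is modelled as a Boolean filling `D : Fin n → Fin n → Bool`
of the `n × n` grid (`D i j = true` meaning that cell in row `i`, column `j`
is dotted; rows are numbered from the top, columns from the left, `0`-based),
satisfying the root, non-ambiguity, minimality and completeness conditions.
-/

namespace CNATf

/-!
Split `{1, …, 2p}` into `p` consecutive blocks of two, i.e. identify it with the lexicographic
product `Fin p ×ₗ Fin 2`. There `σ` is `σ'` on blocks and the reversal inside each block. Two
positions in different blocks are inverted exactly when their blocks are, so every inversion of
`σ'` counts four times, and each of the `p` blocks contributes the single inversion of the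
reversal. The sign is the parity of the number of inversions.
-/

section Inversions

variable {α β γ δ : Type*}

/-- The inversions of a map `f` between ordered types: the pairs of arguments whose order is
reversed by `f`. -/
def inversions [LT α] [LT β] (f : α → β) : Set (α × α) :=
  {q | q.1 < q.2 ∧ f q.2 < f q.1}

theorem ncard_inversions_congr [Preorder α] [Preorder β] [Preorder γ] [Preorder δ]
    (e : α ≃o γ) (e' : β ↪o δ) {f : α → β} {g : γ → δ} (h : ∀ a, g (e a) = e' (f a)) :
    (inversions g).ncard = (inversions f).ncard := by
  have hpre : inversions f = Prod.map e e ⁻¹' inversions g := by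
    ext q
    simp [inversions, h]
  rw [hpre, Set.ncard_preimage_of_injective_subset_range (e.injective.prodMap e.injective)
    (by simp [(e.surjective.prodMap e.surjective).range_eq])]

theorem inversions_prodMap_lex [Preorder α] [Preorder β] [LT γ] [LT δ]
    {f : α → β} (hf : Function.Injective f) (g : γ → δ) :
    inversions (toLex ∘ Prod.map f g ∘ ofLex : α ×ₗ γ → β ×ₗ δ) =
      (ofLex.prodCongr ofLex).trans (Equiv.prodProdProdComm α γ α γ) ⁻¹'
        (inversions f ×ˢ Set.univ ∪ Set.diagonal α ×ˢ inversions g) := by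
  ext ⟨x, y⟩
  simp only [inversions, Prod.Lex.lt_iff, Function.comp_apply, ofLex_toLex, Prod.map_fst,
    Prod.map_snd, hf.eq_iff, Set.mem_preimage, Equiv.trans_apply, Equiv.prodCongr_apply,
    Prod.map_apply, Equiv.prodProdProdComm_apply, Set.mem_union, Set.mem_prod, Set.mem_ofPred_eq,
    Set.mem_univ, and_true, Set.mem_diagonal_iff]
  grind [lt_irrefl]

theorem ncard_inversions_prodMap_lex [Preorder α] [Preorder β] [LT γ] [LT δ] [Finite α] [Finite γ]
    {f : α → β} (hf : Function.Injective f) (g : γ → δ) :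
    (inversions (toLex ∘ Prod.map f g ∘ ofLex : α ×ₗ γ → β ×ₗ δ)).ncard =
      Nat.card γ ^ 2 * (inversions f).ncard + Nat.card α * (inversions g).ncard := by
  have hdisj : Disjoint (inversions f ×ˢ (Set.univ : Set (γ × γ)))
      (Set.diagonal α ×ˢ inversions g) :=
    Set.disjoint_left.2 fun _ hx hdiag => hx.1.1.ne hdiag.1
  have hdiag : (Set.diagonal α).ncard = Nat.card α := by
    rw [← Set.range_diag, Set.ncard_range_of_injective Function.diag_injective]
  rw [inversions_prodMap_lex hf,
    Set.ncard_preimage_of_injective_subset_range (Equiv.injective _) fun q _ =>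
      Equiv.surjective _ q,
    Set.ncard_union_eq hdisj, Set.ncard_prod, Set.ncard_prod, Set.ncard_univ, Nat.card_prod, hdiag]
  ring

theorem sign_eq_neg_one_pow_ncard_inversions {n : ℕ} (π : Equiv.Perm (Fin n)) :
    Equiv.Perm.sign π = (-1) ^ (inversions π).ncard := by
  have hinv : inversions π = ↑({q | q.1 < q.2 ∧ π q.2 < π q.1} : Finset (Fin n × Fin n)) := by
    simp [inversions]
  have hfactor (i j : Fin n) : (if i < j then if π i < π j then 1 else -1 else 1 : ℤˣ) =
      if i < j ∧ π j < π i then -1 else 1 := by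
    grind [π.injective.eq_iff]
  rw [π.sign_eq_prod_prod_Ioi]
  simp_rw [← Finset.filter_lt_eq_Ioi, Finset.prod_filter, hfactor]
  rw [hinv, Set.ncard_coe_finset, ← Finset.prod_const, Finset.prod_filter, Fintype.prod_prod_type]

theorem inversions_rev_two : inversions (Fin.rev : Fin 2 → Fin 2) = {(0, 1)} := by
  ext ⟨i, j⟩
  change i < j ∧ j.rev < i.rev ↔ (i, j) = (0, 1)
  revert i j
  decide

end Inversions

theorem finProdFinEquiv_ofLex_strictMono (m n : ℕ) :
    StrictMono fun x : Fin m ×ₗ Fin n => finProdFinEquiv (ofLex x) := by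
  intro x y hxy
  change (ofLex x).2 + n * (ofLex x).1 < (ofLex y).2 + n * (ofLex y).1.val
  rcases Prod.Lex.lt_iff.1 hxy with hfst | ⟨hfst, hsnd⟩
  · have hblock : n * ((ofLex x).1 + 1) ≤ n * (ofLex y).1 :=
      Nat.mul_le_mul_left n (Nat.succ_le_of_lt hfst)
    have hoffset : (ofLex x).2 < n := (ofLex x).2.isLt
    lia
  · rw [hfst]
    exact Nat.add_lt_add_right hsnd _

/-- The lexicographic product of `Fin m` and `Fin n` is `Fin (m * n)`, cut into `m` consecutive
blocks of length `n`. -/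
def finProdLexOrderIso (m n : ℕ) : Fin m ×ₗ Fin n ≃o Fin (m * n) where
  toEquiv := ofLex.trans finProdFinEquiv
  map_rel_iff' := (finProdFinEquiv_ofLex_strictMono m n).le_iff_le

/-- The decomposition of `Fin (2 * p)` into the `p` consecutive pairs `{2 * i, 2 * i + 1}`. -/
def pairOrderIso (p : ℕ) : Fin p ×ₗ Fin 2 ≃o Fin (2 * p) :=
  (finProdLexOrderIso p 2).trans (Fin.castOrderIso (mul_comm p 2))

theorem pairOrderIso_zero {p : ℕ} (i : Fin p) :
    pairOrderIso p (toLex (i, 0)) = ⟨2 * i, by lia⟩ :=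
  Fin.ext (zero_add _)

theorem pairOrderIso_one {p : ℕ} (i : Fin p) :
    pairOrderIso p (toLex (i, 1)) = ⟨2 * i + 1, by lia⟩ :=
  Fin.ext (add_comm _ _)

/-- Let `p ≥ 1` and `σ'` a permutation of `{1, …, p}`.
Define `σ : {1, …, 2p} → {1, …, 2p}` by `σ(2i - 1) = 2σ'(i)` and
`σ(2i) = 2σ'(i) - 1` (written here `0`-based: `σ(2i) = 2σ'(i) + 1` and
`σ(2i + 1) = 2σ'(i)`). Then `σ` is a permutation of `{1, …, 2p}`, its number
of inversions satisfies `inv σ = 4 inv σ' + p`, and `sgn σ = (-1)^p`. -/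
theorem doubled_perm_inversions (p : ℕ) (hp : 1 ≤ p) (σ' : Equiv.Perm (Fin p))
    (σ : Fin (2 * p) → Fin (2 * p))
    (hσ : ∀ i : Fin p,
      σ ⟨2 * (i : ℕ), by have := i.2; omega⟩
          = ⟨2 * ((σ' i : ℕ)) + 1, by have := (σ' i).2; omega⟩ ∧
      σ ⟨2 * (i : ℕ) + 1, by have := i.2; omega⟩
          = ⟨2 * ((σ' i : ℕ)), by have := (σ' i).2; omega⟩) :
    Function.Bijective σ ∧
    Nat.card {q : Fin (2 * p) × Fin (2 * p) // q.1 < q.2 ∧ σ q.2 < σ q.1}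
      = 4 * Nat.card {q : Fin p × Fin p // q.1 < q.2 ∧ σ' q.2 < σ' q.1} + p ∧
    ∀ e : Equiv.Perm (Fin (2 * p)), (∀ x : Fin (2 * p), e x = σ x) →
      Equiv.Perm.sign e = (-1) ^ p := by
  let e := pairOrderIso p
  let τ : Fin p ×ₗ Fin 2 → Fin p ×ₗ Fin 2 := toLex ∘ Prod.map σ' Fin.rev ∘ ofLex
  have hblock : ∀ x, σ (e x) = e (τ x) := by
    rintro ⟨i, b⟩
    fin_cases b
    · exact (congrArg σ (pairOrderIso_zero i)).trans ((hσ i).1.trans (pairOrderIso_one _).symm)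
    · exact (congrArg σ (pairOrderIso_one i)).trans ((hσ i).2.trans (pairOrderIso_zero _).symm)
  have hbij : Function.Bijective σ := by
    have hτ : Function.Bijective τ :=
      toLex.bijective.comp ((σ'.bijective.prodMap Fin.rev_bijective).comp ofLex.bijective)
    have hcomp : σ ∘ e = e ∘ τ := funext hblock
    exact (Function.Bijective.of_comp_iff σ e.bijective).1 (hcomp ▸ e.bijective.comp hτ)
  have hcard : (inversions σ).ncard = 4 * (inversions σ').ncard + p := by
    rw [ncard_inversions_congr e e.toOrderEmbedding hblock,
      ncard_inversions_prodMap_lex σ'.injective, inversions_rev_two]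
    simp only [Nat.card_fin, Nat.reducePow, Set.ncard_singleton, mul_one]
  refine ⟨hbij, hcard, fun π hπ => ?_⟩
  obtain rfl : ⇑π = σ := funext hπ
  rw [sign_eq_neg_one_pow_ncard_inversions, hcard, pow_add,
    Even.neg_one_pow ((by decide : Even 4).mul_right _), one_mul]

end CNATf
end
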